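/- Let ω be a constant invertible symmetric n×n real matrix with inverse entries ω^{kl}, U ⊆ ℝⁿ open, ρ₀: U → ℝ and ρ: U → ℝⁿ of class C². Define on U: F_{ij} := ρ_iρ_j − ½ (Σ_{r,s} ω^{rs} ρ_r ρ_s) ω_{ij}; 𝓐_i := ∂_iρ₀ − ρ_i; 𝓑_{j,i} := ∂_jρ_i − F_{ij}; 𝓘_{i,k} := ∂_k𝓐_i − 𝓑_{i,k}; and 𝓙_{k,j,i} := ω_{ij} (Σ_{r,s} ω^{rs} ρ_r 𝓑_{k,s}) + ∂_j𝓑_{k,i} − ρ_i 𝓑_{k,j} − ρ_j 𝓑_{k,i}. Then for all indices: 𝓘_{i,k} = 𝓘_{k,i} and 𝓙_{k,j,i} = 𝓙_{j,k,i} on U. -/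

import Mathlib

open Matrix

/-- Partial derivative `∂ᵢ f (x)` of a scalar function on `ℝⁿ`. -/
noncomputable def pd {n : ℕ} (f : (Fin n → ℝ) → ℝ) (i : Fin n) (x : Fin n → ℝ) : ℝ :=
  fderiv ℝ f x (Pi.single i 1)

section PartialDerivative

variable {n : ℕ} {f g : (Fin n → ℝ) → ℝ} {x : Fin n → ℝ}

theorem ContDiffAt.differentiableAt_pd (hf : ContDiffAt ℝ 2 f x) (i : Fin n) :
    DifferentiableAt ℝ (pd f i) x :=
  ((hf.fderiv_right (m := 1) (by norm_num)).differentiableAt one_ne_zero).clm_apply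
    (differentiableAt_const _)

theorem ContDiffAt.pd_pd_comm (hf : ContDiffAt ℝ 2 f x) (i j : Fin n) :
    pd (pd f i) j x = pd (pd f j) i x := by
  have hd : DifferentiableAt ℝ (fderiv ℝ f) x :=
    (hf.fderiv_right (m := 1) (by norm_num)).differentiableAt one_ne_zero
  have key : ∀ i j : Fin n,
      pd (pd f i) j x = fderiv ℝ (fderiv ℝ f) x (Pi.single j 1) (Pi.single i 1) := by
    intro i j
    change fderiv ℝ (fun y => fderiv ℝ f y (Pi.single i 1)) x (Pi.single j 1) = _
    rw [fderiv_clm_apply hd (differentiableAt_const _)]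
    simp
  rw [key, key]
  exact (hf.isSymmSndFDerivAt (by simp)).eq _ _

theorem pd_sub (hf : DifferentiableAt ℝ f x) (hg : DifferentiableAt ℝ g x) (i : Fin n) :
    pd (fun y => f y - g y) i x = pd f i x - pd g i x := by
  simp [pd, fderiv_fun_sub hf hg]

theorem pd_mul (hf : DifferentiableAt ℝ f x) (hg : DifferentiableAt ℝ g x) (i : Fin n) :
    pd (fun y => f y * g y) i x = f x * pd g i x + g x * pd f i x := by
  simp [pd, fderiv_fun_mul hf hg]

theorem pd_const_mul (hf : DifferentiableAt ℝ f x) (c : ℝ) (i : Fin n) :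
    pd (fun y => c * f y) i x = c * pd f i x := by
  simp [pd, fderiv_const_mul hf]

theorem pd_sum {ι : Type*} {s : Finset ι} {h : ι → (Fin n → ℝ) → ℝ}
    (hh : ∀ a ∈ s, DifferentiableAt ℝ (h a) x) (i : Fin n) :
    pd (fun y => ∑ a ∈ s, h a y) i x = ∑ a ∈ s, pd (h a) i x := by
  simp [pd, fderiv_fun_sum hh]

/-- Derivative of the quadratic form of a symmetric matrix along a vector-valued map. -/
theorem pd_quadraticForm {W : Matrix (Fin n) (Fin n) ℝ} (hW : W.IsSymm)
    {v : (Fin n → ℝ) → Fin n → ℝ} (hv : ∀ i, DifferentiableAt ℝ (fun y => v y i) x)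
    (j : Fin n) :
    pd (fun y => ∑ r, ∑ s, W r s * v y r * v y s) j x
      = 2 * ∑ r, ∑ s, W r s * v x r * pd (fun y => v y s) j x := by
  have hd : ∀ r s, DifferentiableAt ℝ (fun y => W r s * v y r * v y s) x := fun r s =>
    ((hv r).const_mul _).mul (hv s)
  have hterm : ∀ r s, pd (fun y => W r s * v y r * v y s) j x
      = W r s * v x r * pd (fun y => v y s) j x
        + W s r * v x s * pd (fun y => v y r) j x := by
    intro r s
    rw [pd_mul ((hv r).const_mul _) (hv s), pd_const_mul (hv r), hW.apply r s]
    ring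
  rw [pd_sum fun r _ => DifferentiableAt.fun_sum fun s _ => hd r s]
  simp_rw [pd_sum fun s _ => hd _ s, hterm, Finset.sum_add_distrib]
  rw [Finset.sum_comm (f := fun r s => W s r * v x s * pd (fun y => v y r) j x), two_mul]

end PartialDerivative

/-- Contracting `v` with `v ⊗ v - ½ |v|² ω` through `ω⁻¹` gives `½ |v|² v`. -/
theorem sum_inv_mul_traceModified {n : ℕ} {ω : Matrix (Fin n) (Fin n) ℝ} (hinv : IsUnit ω.det)
    (v : Fin n → ℝ) (q : ℝ) (k : Fin n) :
    ∑ r, ∑ s, ω⁻¹ r s * v r * (v s * v k - (1 / 2) * q * ω s k)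
      = (∑ r, ∑ s, ω⁻¹ r s * v r * v s) * v k - (1 / 2) * q * v k := by
  have hone : ∀ r, ∑ s, ω⁻¹ r s * ω s k = (1 : Matrix (Fin n) (Fin n) ℝ) r k := fun r => by
    rw [← Matrix.nonsing_inv_mul ω hinv, Matrix.mul_apply]
  have hrow : ∀ r, ∑ s, ω⁻¹ r s * v r * (v s * v k - (1 / 2) * q * ω s k)
      = (∑ s, ω⁻¹ r s * v r * v s) * v k
        - (1 / 2) * q * (v r * (1 : Matrix (Fin n) (Fin n) ℝ) r k) := by
    intro r
    rw [← hone, Finset.sum_mul, Finset.mul_sum, Finset.mul_sum, ← Finset.sum_sub_distrib]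
    exact Finset.sum_congr rfl fun s _ => by ring
  simp_rw [hrow, Finset.sum_sub_distrib, ← Finset.sum_mul, ← Finset.mul_sum]
  simp [Matrix.one_apply]

/-- the symmetries `𝓘_{i,k} = 𝓘_{k,i}` and `𝓙_{k,j,i} = 𝓙_{j,k,i}` of the
gauge strength fields built from the flat c-system data (the complex property
`D_{2,c} ∘ D_{1,c} = 0`). -/
theorem stmt_14 (n : ℕ) (ω : Matrix (Fin n) (Fin n) ℝ)
    (hinv : IsUnit ω.det) (hsym : ω.IsSymm)
    (U : Set (Fin n → ℝ)) (hU : IsOpen U)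
    (ρ₀ : (Fin n → ℝ) → ℝ) (hρ₀ : ContDiffOn ℝ 2 ρ₀ U)
    (ρ : (Fin n → ℝ) → (Fin n → ℝ)) (hρ : ContDiffOn ℝ 2 ρ U)
    (F : Fin n → Fin n → (Fin n → ℝ) → ℝ)
    (hF : ∀ i j x, F i j x
      = ρ x i * ρ x j - (1 / 2) * (∑ r, ∑ s, ω⁻¹ r s * ρ x r * ρ x s) * ω i j)
    (𝓐 : Fin n → (Fin n → ℝ) → ℝ)
    (h𝓐 : ∀ i x, 𝓐 i x = pd ρ₀ i x - ρ x i)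
    (𝓑 : Fin n → Fin n → (Fin n → ℝ) → ℝ)
    (h𝓑 : ∀ j i x, 𝓑 j i x = pd (fun y => ρ y i) j x - F i j x)
    (𝓘 : Fin n → Fin n → (Fin n → ℝ) → ℝ)
    (h𝓘 : ∀ i k x, 𝓘 i k x = pd (𝓐 i) k x - 𝓑 i k x)
    (𝓙 : Fin n → Fin n → Fin n → (Fin n → ℝ) → ℝ)
    (h𝓙 : ∀ k j i x, 𝓙 k j i x
      = ω i j * (∑ r, ∑ s, ω⁻¹ r s * ρ x r * 𝓑 k s x)
        + pd (𝓑 k i) j x - ρ x i * 𝓑 k j x - ρ x j * 𝓑 k i x) :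
    (∀ x ∈ U, ∀ i k : Fin n, 𝓘 i k x = 𝓘 k i x) ∧
    (∀ x ∈ U, ∀ i j k : Fin n, 𝓙 k j i x = 𝓙 j k i x) := by
  have hFsymm : ∀ i j x, F i j x = F j i x := fun i j x => by
    rw [hF, hF, hsym.apply i j]
    ring
  have hρi : ∀ x ∈ U, ∀ i, ContDiffAt ℝ 2 (fun y => ρ y i) x := fun x hx i =>
    contDiffAt_pi.mp (hρ.contDiffAt (hU.mem_nhds hx)) i
  have hρd : ∀ x ∈ U, ∀ i, DifferentiableAt ℝ (fun y => ρ y i) x := fun x hx i =>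
    (hρi x hx i).differentiableAt two_ne_zero
  refine ⟨fun x hx i k => ?_, fun x hx i j k => ?_⟩
  · have hρ₀x : ContDiffAt ℝ 2 ρ₀ x := hρ₀.contDiffAt (hU.mem_nhds hx)
    have hpd : ∀ i k, pd (𝓐 i) k x = pd (pd ρ₀ i) k x - pd (fun y => ρ y i) k x := by
      intro i k
      rw [funext (h𝓐 i)]
      exact pd_sub (hρ₀x.differentiableAt_pd i) (hρd x hx i) k
    rw [h𝓘, h𝓘, hpd, hpd, h𝓑, h𝓑, hρ₀x.pd_pd_comm i k, hFsymm i k]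
    ring
  · have hW : (ω⁻¹).IsSymm := by
      rw [Matrix.IsSymm, Matrix.transpose_nonsing_inv, hsym.eq]
    have hd := hρd x hx
    have hQd : DifferentiableAt ℝ (fun y => ∑ r, ∑ s, ω⁻¹ r s * ρ y r * ρ y s) x :=
      DifferentiableAt.fun_sum fun r _ => DifferentiableAt.fun_sum fun s _ =>
        ((hd r).const_mul _).mul (hd s)
    have hF' : ∀ i k, F i k = fun y =>
        ρ y i * ρ y k - (1 / 2 * ω i k) * ∑ r, ∑ s, ω⁻¹ r s * ρ y r * ρ y s :=
      fun i k => funext fun y => by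
        rw [hF]
        ring
    have hFd : ∀ i k, DifferentiableAt ℝ (F i k) x := fun i k => by
      rw [hF']
      exact ((hd i).mul (hd k)).sub (hQd.const_mul _)
    have hpdF : ∀ i k j, pd (F i k) j x
        = ρ x i * pd (fun y => ρ y k) j x + ρ x k * pd (fun y => ρ y i) j x
          - ω i k * ∑ r, ∑ s, ω⁻¹ r s * ρ x r * pd (fun y => ρ y s) j x := by
      intro i k j
      rw [hF', pd_sub ((hd i).fun_mul (hd k)) (hQd.const_mul _), pd_mul (hd i) (hd k),
        pd_const_mul hQd, pd_quadraticForm hW hd]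
      ring
    have hpdB : ∀ k i j, pd (𝓑 k i) j x
        = pd (pd (fun y => ρ y i) k) j x - pd (F i k) j x := by
      intro k i j
      rw [funext (h𝓑 k i)]
      exact pd_sub ((hρi x hx i).differentiableAt_pd k) (hFd i k) j
    have hcontr : ∀ k, ∑ r, ∑ s, ω⁻¹ r s * ρ x r * 𝓑 k s x
        = (∑ r, ∑ s, ω⁻¹ r s * ρ x r * pd (fun y => ρ y s) k x)
          - (1 / 2) * (∑ r, ∑ s, ω⁻¹ r s * ρ x r * ρ x s) * ρ x k := by
      intro k
      simp_rw [h𝓑, mul_sub, Finset.sum_sub_distrib, hF]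
      rw [sum_inv_mul_traceModified hinv]
      ring
    rw [h𝓙, h𝓙, hcontr, hcontr, hpdB, hpdB, hpdF, hpdF, (hρi x hx i).pd_pd_comm k j,
      h𝓑, h𝓑, h𝓑, h𝓑, hFsymm j k, hF i k, hF i j]
    ring
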